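/- (Return gap from policy shift, same dynamics.) Let P be a dynamics, π₁ and π₂ two policies, and ε_π := sup_{s∈S} D_TV(π₁(·|s), π₂(·|s)). Then the gap between the two returns under the same dynamics P satisfies |J_P(π₁) − J_P(π₂)| ≤ 2·R_max·ε_π/(1−γ)². -/

import Mathlib

open scoped ENNReal

noncomputable section

/-- Total variation distance between two probability mass functions on a countable type:
`D_TV(p, q) = (1/2) * Σ_x |p(x) - q(x)|`. -/
def tv {X : Type*} (p q : PMF X) : ℝ :=
  (1 / 2) * ∑' x : X, |(p x).toReal - (q x).toReal|

/-- The state-action distribution at time `t` under initial distribution `ρ0`, policy `π`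
and dynamics `P`:  `ν_0(s,a) = ρ0(s)·π(a|s)` and
`ν_{t+1}(s',a') = Σ_{s,a} ν_t(s,a)·P(s'|s,a)·π(a'|s')`. -/
def nu {S A : Type*} (ρ0 : PMF S) (π : S → PMF A) (P : S × A → PMF S) : ℕ → PMF (S × A)
  | 0 => ρ0.bind fun s => (π s).map fun a => (s, a)
  | (t + 1) => (nu ρ0 π P t).bind fun sa =>
      (P sa).bind fun s' => (π s').map fun a' => (s', a')

/-- The discounted return `J_P(π) = Σ_{t=0}^∞ γ^t · E_{(s,a)∼ν_t^{π,P}}[R(s,a)]`. -/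
def J {S A : Type*} (R : S × A → ℝ) (γ : ℝ) (ρ0 : PMF S) (π : S → PMF A)
    (P : S × A → PMF S) : ℝ :=
  ∑' t : ℕ, γ ^ t * ∑' sa : S × A, ((nu ρ0 π P t) sa).toReal * R sa

/-- One-sided excess mass of `p` over `q`. -/
def exc {X : Type*} (p q : PMF X) : ℝ≥0∞ := ∑' x, (p x - q x)

lemma exc_self {X : Type*} (p : PMF X) : exc p p = 0 := by simp [exc]

lemma exc_le_one {X : Type*} (p q : PMF X) : exc p q ≤ 1 := by
  rw [← p.tsum_coe]
  exact ENNReal.tsum_le_tsum fun x => tsub_le_self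

lemma exc_comm {X : Type*} (p q : PMF X) : exc p q = exc q p := by
  have h : exc p q + 1 = exc q p + 1 := by
    conv_lhs => rw [← q.tsum_coe]
    conv_rhs => rw [← p.tsum_coe]
    unfold exc
    rw [← ENNReal.tsum_add, ← ENNReal.tsum_add]
    refine tsum_congr fun x => ?_
    rw [tsub_add_eq_max, tsub_add_eq_max, max_comm]
  exact (ENNReal.add_left_inj ENNReal.one_ne_top).1 h

lemma exc_bind {X Y : Type*} (p q : PMF X) (f g : X → PMF Y) (c : ℝ≥0∞)
    (h : ∀ x, exc (f x) (g x) ≤ c) : exc (p.bind f) (q.bind g) ≤ exc p q + c := by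
  calc exc (p.bind f) (q.bind g)
      ≤ ∑' y, ∑' x, ((p x - q x) * f x y + q x * (f x y - g x y)) := by
        refine ENNReal.tsum_le_tsum fun y => ?_
        rw [PMF.bind_apply, PMF.bind_apply, tsub_le_iff_right, ← ENNReal.tsum_add]
        refine ENNReal.tsum_le_tsum fun x => ?_
        calc p x * f x y ≤ ((p x - q x) + q x) * f x y := by gcongr; exact le_tsub_add
          _ = (p x - q x) * f x y + q x * f x y := by ring
          _ ≤ (p x - q x) * f x y + q x * ((f x y - g x y) + g x y) := by
              gcongr; exact le_tsub_add
          _ = _ := by ring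
    _ = ∑' x, ((p x - q x) + q x * exc (f x) (g x)) := by
        rw [ENNReal.tsum_comm]
        refine tsum_congr fun x => ?_
        rw [ENNReal.tsum_add, ENNReal.tsum_mul_left, ENNReal.tsum_mul_left, (f x).tsum_coe,
          mul_one]
        rfl
    _ ≤ ∑' x, ((p x - q x) + q x * c) := by
        refine ENNReal.tsum_le_tsum fun x => ?_
        gcongr
        exact h x
    _ = exc p q + c := by
        rw [ENNReal.tsum_add, ENNReal.tsum_mul_right, q.tsum_coe, one_mul]
        rfl

lemma exc_map {X Y : Type*} (p q : PMF X) (f : X → Y) : exc (p.map f) (q.map f) ≤ exc p q := by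
  have := exc_bind p q (PMF.pure ∘ f) (PMF.pure ∘ f) 0 (fun x => by rw [exc_self])
  simpa [PMF.map] using this

lemma exc_nu {S A : Type*} (ρ0 : PMF S) (P : S × A → PMF S) (π₁ π₂ : S → PMF A) (c : ℝ≥0∞)
    (h : ∀ s, exc (π₁ s) (π₂ s) ≤ c) (t : ℕ) :
    exc (nu ρ0 π₁ P t) (nu ρ0 π₂ P t) ≤ (t + 1) * c := by
  have hstep : ∀ ρ : PMF S, exc (ρ.bind fun s => (π₁ s).map fun a => (s, a))
      (ρ.bind fun s => (π₂ s).map fun a => (s, a)) ≤ c := fun ρ => by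
    have := exc_bind ρ ρ (fun s => (π₁ s).map fun a => (s, a))
      (fun s => (π₂ s).map fun a => (s, a)) c (fun s => (exc_map _ _ _).trans (h s))
    rwa [exc_self, zero_add] at this
  induction t with
  | zero => simpa [nu] using hstep ρ0
  | succ t ih =>
    calc _ ≤ exc (nu ρ0 π₁ P t) (nu ρ0 π₂ P t) + c := exc_bind _ _ _ _ c fun sa => hstep _
      _ ≤ (t + 1) * c + c := by gcongr
      _ = _ := by push_cast; ring

lemma pmf_summable {X : Type*} (p : PMF X) : Summable fun x => (p x).toReal :=
  ENNReal.summable_toReal (by rw [p.tsum_coe]; exact ENNReal.one_ne_top)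

lemma tv_eq {X : Type*} (p q : PMF X) : tv p q = (exc p q).toReal := by
  have hne : ∀ p q : PMF X, exc p q ≠ ⊤ := fun p q =>
    ((exc_le_one p q).trans_lt ENNReal.one_lt_top).ne
  have h : ∀ x, |(p x).toReal - (q x).toReal| = (p x - q x).toReal + (q x - p x).toReal := by
    intro x
    rcases le_total (p x) (q x) with hx | hx
    · rw [tsub_eq_zero_of_le hx, ENNReal.toReal_sub_of_le hx (q.apply_ne_top x),
        abs_of_nonpos (sub_nonpos.2 (ENNReal.toReal_mono (q.apply_ne_top x) hx))]
      simp
    · rw [tsub_eq_zero_of_le hx, ENNReal.toReal_sub_of_le hx (p.apply_ne_top x),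
        abs_of_nonneg (sub_nonneg.2 (ENNReal.toReal_mono (p.apply_ne_top x) hx))]
      simp
  have e : ∀ p q : PMF X, ∑' x, (p x - q x).toReal = (exc p q).toReal := fun p q =>
    (ENNReal.tsum_toReal_eq fun x => (ENNReal.sub_ne_top (p.apply_ne_top x))).symm
  unfold tv
  rw [tsum_congr h, (ENNReal.summable_toReal (hne p q)).tsum_add
    (ENNReal.summable_toReal (hne q p)), e, e, exc_comm q p]
  ring

lemma expect_summable {X : Type*} (p : PMF X) (R : X → ℝ) (M : ℝ) (hR : ∀ x, |R x| ≤ M) :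
    Summable fun x => (p x).toReal * R x :=
  Summable.of_norm_bounded ((pmf_summable p).mul_right M) fun x => by
    rw [Real.norm_eq_abs, abs_mul, abs_of_nonneg ENNReal.toReal_nonneg]
    exact mul_le_mul_of_nonneg_left (hR x) ENNReal.toReal_nonneg

lemma expect_diff {X : Type*} (p q : PMF X) (R : X → ℝ) (M : ℝ) (hR : ∀ x, |R x| ≤ M) :
    |∑' x, (p x).toReal * R x - ∑' x, (q x).toReal * R x| ≤ 2 * M * tv p q := by
  have hs : Summable fun x => |(p x).toReal - (q x).toReal| :=
    ((pmf_summable p).sub (pmf_summable q)).abs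
  rw [← (expect_summable p R M hR).tsum_sub (expect_summable q R M hR)]
  have := tsum_of_norm_bounded (hs.mul_right M).hasSum
    (f := fun x => (p x).toReal * R x - (q x).toReal * R x) fun x => by
      rw [Real.norm_eq_abs, ← sub_mul, abs_mul]
      exact mul_le_mul_of_nonneg_left (hR x) (abs_nonneg _)
  rw [Real.norm_eq_abs, tsum_mul_right] at this
  refine this.trans (le_of_eq ?_)
  unfold tv
  ring

lemma expect_abs {X : Type*} (p : PMF X) (R : X → ℝ) (M : ℝ) (hR : ∀ x, |R x| ≤ M) :
    |∑' x, (p x).toReal * R x| ≤ M := by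
  have h1 : ∑' x, (p x).toReal = 1 := by
    rw [← ENNReal.tsum_toReal_eq p.apply_ne_top, p.tsum_coe, ENNReal.toReal_one]
  have := tsum_of_norm_bounded ((pmf_summable p).mul_right M).hasSum
    (f := fun x => (p x).toReal * R x) fun x => by
      rw [Real.norm_eq_abs, abs_mul, abs_of_nonneg ENNReal.toReal_nonneg]
      exact mul_le_mul_of_nonneg_left (hR x) ENNReal.toReal_nonneg
  rwa [Real.norm_eq_abs, tsum_mul_right, h1, one_mul] at this

/-- **Return gap from policy shift, same dynamics.**
`|J_P(π₁) - J_P(π₂)| ≤ 2·R_max·ε_π/(1-γ)²`. -/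
theorem return_gap_policy_shift {S A : Type*} [Countable S] [Countable A]
    (P : S × A → PMF S) (π₁ π₂ : S → PMF A)
    (R : S × A → ℝ) (Rmax : ℝ) (hR : ∀ sa : S × A, |R sa| ≤ Rmax)
    (γ : ℝ) (hγ0 : 0 ≤ γ) (hγ1 : γ < 1) (ρ0 : PMF S)
    (επ : ℝ) (hεπ : επ = ⨆ s : S, tv (π₁ s) (π₂ s)) :
    |J R γ ρ0 π₁ P - J R γ ρ0 π₂ P| ≤ 2 * Rmax * επ / (1 - γ) ^ 2 := by
  have hM : 0 ≤ Rmax := (abs_nonneg _).trans (expect_abs (nu ρ0 π₁ P 0) R Rmax hR)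
  have hbdd : BddAbove (Set.range fun s => tv (π₁ s) (π₂ s)) := by
    refine ⟨1, ?_⟩
    rintro _ ⟨s, rfl⟩
    simp only [tv_eq]
    simpa using ENNReal.toReal_mono ENNReal.one_ne_top (exc_le_one (π₁ s) (π₂ s))
  have hle : ∀ s, tv (π₁ s) (π₂ s) ≤ επ := fun s => hεπ ▸ le_ciSup hbdd s
  have hε : 0 ≤ επ := by
    rw [hεπ]
    exact Real.iSup_nonneg fun s => by rw [tv_eq]; exact ENNReal.toReal_nonneg
  have hexc : ∀ s, exc (π₁ s) (π₂ s) ≤ ENNReal.ofReal επ := fun s =>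
    (ENNReal.le_ofReal_iff_toReal_le
      ((exc_le_one _ _).trans_lt ENNReal.one_lt_top).ne hε).2 (tv_eq (π₁ s) (π₂ s) ▸ hle s)
  have htv : ∀ t : ℕ, tv (nu ρ0 π₁ P t) (nu ρ0 π₂ P t) ≤ (t + 1) * επ := fun t => by
    rw [tv_eq]
    refine ENNReal.toReal_le_of_le_ofReal (by positivity) ?_
    refine (exc_nu ρ0 P π₁ π₂ _ hexc t).trans (le_of_eq ?_)
    rw [ENNReal.ofReal_mul (by positivity), ENNReal.ofReal_add (by positivity) zero_le_one]
    simp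
  have hsum : ∀ π : S → PMF A, Summable fun t : ℕ =>
      γ ^ t * ∑' sa : S × A, ((nu ρ0 π P t) sa).toReal * R sa := fun π =>
    Summable.of_norm_bounded ((summable_geometric_of_lt_one hγ0 hγ1).mul_right Rmax) fun t => by
      rw [Real.norm_eq_abs, abs_mul, abs_of_nonneg (pow_nonneg hγ0 t)]
      exact mul_le_mul_of_nonneg_left (expect_abs _ R Rmax hR) (pow_nonneg hγ0 t)
  have hgeo : HasSum (fun t : ℕ => ((t : ℝ) + 1) * γ ^ t) (1 / (1 - γ) ^ 2) := by
    have h1 := hasSum_choose_mul_geometric_of_norm_lt_one 1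
      (r := γ) (by rwa [Real.norm_eq_abs, abs_of_nonneg hγ0])
    simpa using h1
  unfold J
  rw [← (hsum π₁).tsum_sub (hsum π₂)]
  have := tsum_of_norm_bounded (hgeo.mul_left (2 * Rmax * επ))
    (f := fun t : ℕ => γ ^ t * ∑' sa : S × A, ((nu ρ0 π₁ P t) sa).toReal * R sa -
      γ ^ t * ∑' sa : S × A, ((nu ρ0 π₂ P t) sa).toReal * R sa) fun t => by
      rw [Real.norm_eq_abs, ← mul_sub, abs_mul, abs_of_nonneg (pow_nonneg hγ0 t)]
      calc _ ≤ γ ^ t * (2 * Rmax * ((t + 1) * επ)) := by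
            refine mul_le_mul_of_nonneg_left ((expect_diff _ _ R Rmax hR).trans ?_)
              (pow_nonneg hγ0 t)
            exact mul_le_mul_of_nonneg_left (htv t) (by positivity)
        _ = _ := by ring
  rw [Real.norm_eq_abs] at this
  refine this.trans (le_of_eq ?_)
  ring
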